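/- Let n ≥ 2, let δ ≥ 1, and let f ∈ ℂ[x,y] be a nonzero homogeneous polynomial of degree n which is NOT of the form K·(a₁·x + b₁·y)^p·(a₂·x + b₂·y)^{n−p} with K ∈ ℂ nonzero, 0 ≤ p ≤ n, and nonzero (a₁,b₁), (a₂,b₂) ∈ ℂ² satisfying conj(a₁)·a₂ + conj(b₁)·b₂ = 0. Suppose (a·x + b·y)^δ divides f for some nonzero (a,b) ∈ ℂ². Then, setting g := conj(a)·∂f/∂x + conj(b)·∂f/∂y and D := (−b)·∂/∂x + a·∂/∂y, there exists a nonzero (c,d) ∈ ℂ² such that: (i) f(−d,c) ≠ 0; (ii) g(−d,c) = 0; (iii) f(−b,a) = 0; and (iv) D^k f = 0 for every integer k with n − δ < k ≤ n. -/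

import Mathlib

open MvPolynomial

/-!
Let `ℓ = a x + b y`, `w = -b̄ x + ā y`, and restrict `f` to the affine line
`t ↦ (-b, a) + t (ā, b̄)`, obtaining a univariate polynomial `P`. Then `P(0) = 0` because `ℓ ∣ f`,
and the derivative of `P` is the restriction of `g`, so (i) and (ii) ask for a critical point of `P`
that is not a root. If every critical point were a root, comparing root multiplicities of `P` and
`P'` would leave `P` with a single distinct root, so `P = K t ^ m`; homogenizing back in the
coordinates `(ℓ, w)` gives `f = K' ℓ ^ m w ^ (n - m)`, a rotated Dicke state. Condition (iv) holds
because `D` annihilates `ℓ` and lowers degrees, and the cofactor of `ℓ ^ δ` in `f` has degree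
`n - δ`.
-/

section UnivariateRoots

variable {R : Type*} [CommRing R] [IsDomain R] [CharZero R]
variable {K : Type*} [Field K] [IsAlgClosed K] [CharZero K]

lemma roots_eq_roots_derivative_add_dedup_of_isRoot_derivative [DecidableEq R] {P : Polynomial R}
    (h : ∀ t, P.derivative.IsRoot t → P.IsRoot t) :
    P.roots = P.derivative.roots + P.roots.dedup := by
  rcases eq_or_ne P 0 with rfl | hP
  · simp
  ext t
  simp only [Multiset.count_add, Polynomial.count_roots, Multiset.count_dedup,
    Polynomial.mem_roots hP]
  by_cases ht : P.IsRoot t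
  · have hpos := (Polynomial.rootMultiplicity_pos hP).2 ht
    rw [if_pos ht, Polynomial.derivative_rootMultiplicity_of_root ht, Nat.sub_add_cancel hpos]
  · rw [if_neg ht, Polynomial.rootMultiplicity_eq_zero ht,
      Polynomial.rootMultiplicity_eq_zero (mt (h t) ht)]

lemma card_dedup_roots_eq_one_of_isRoot_derivative [DecidableEq K] {P : Polynomial K}
    (hdeg : P.natDegree ≠ 0) (h : ∀ t, P.derivative.IsRoot t → P.IsRoot t) :
    P.roots.dedup.card = 1 := by
  have hcard := congrArg Multiset.card (roots_eq_roots_derivative_add_dedup_of_isRoot_derivative h)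
  rw [Multiset.card_add, IsAlgClosed.card_roots_eq_natDegree, IsAlgClosed.card_roots_eq_natDegree,
    Polynomial.natDegree_derivative] at hcard
  lia

lemma eq_C_mul_X_sub_C_pow_of_isRoot_of_isRoot_derivative {P : Polynomial K} {r : K}
    (hr : P.IsRoot r) (h : ∀ t, P.derivative.IsRoot t → P.IsRoot t) :
    P = Polynomial.C P.leadingCoeff * (Polynomial.X - Polynomial.C r) ^ P.natDegree := by
  classical
  rcases eq_or_ne P 0 with rfl | hP
  · simp
  have hr_mem : r ∈ P.roots.dedup := Multiset.mem_dedup.2 ((Polynomial.mem_roots hP).2 hr)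
  have hdeg : P.natDegree ≠ 0 := (Polynomial.natDegree_pos_of_aeval_root hP hr (by simp)).ne'
  obtain ⟨s, hs⟩ := Multiset.card_eq_one.1 (card_dedup_roots_eq_one_of_isRoot_derivative hdeg h)
  obtain rfl : r = s := by simpa [hs] using hr_mem
  have hroots : P.roots = Multiset.replicate P.natDegree r :=
    Multiset.eq_replicate.2 ⟨IsAlgClosed.card_roots_eq_natDegree, fun t ht =>
      by simpa [hs] using Multiset.mem_dedup.2 ht⟩
  simpa [hroots] using (IsAlgClosed.splits P).eq_prod_roots

lemma exists_eval_derivative_eq_zero_and_eval_ne_zero {P : Polynomial K} {r : K}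
    (hr : P.eval r = 0)
    (hP : P ≠ Polynomial.C P.leadingCoeff * (Polynomial.X - Polynomial.C r) ^ P.natDegree) :
    ∃ t, P.derivative.eval t = 0 ∧ P.eval t ≠ 0 := by
  contrapose! hP
  exact eq_C_mul_X_sub_C_pow_of_isRoot_of_isRoot_derivative hr hP

end UnivariateRoots

section DirectionalDerivative

variable {σ R : Type*} [CommSemiring R]

/-- The derivative of polynomials in the constant direction `v`, characterized as the derivation
sending `X i` to the constant `v i`. -/
noncomputable def dirDeriv (v : σ → R) : Derivation R (MvPolynomial σ R) (MvPolynomial σ R) :=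
  mkDerivation R fun i => C (v i)

@[simp]
lemma dirDeriv_X (v : σ → R) (i : σ) : dirDeriv v (X i) = C (v i) :=
  mkDerivation_X R _ i

lemma dirDeriv_fin_two (u v : R) :
    ⇑(dirDeriv ![u, v]) = fun f : MvPolynomial (Fin 2) R =>
      C u * pderiv (0 : Fin 2) f + C v * pderiv (1 : Fin 2) f := by
  have hsum : dirDeriv ![u, v] = (C u : MvPolynomial (Fin 2) R) • pderiv (0 : Fin 2) +
      (C v : MvPolynomial (Fin 2) R) • pderiv (1 : Fin 2) := by
    ext1 i
    fin_cases i <;> simp [pderiv_X]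
  ext1 f
  simp [hsum]

lemma coeff_dirDeriv_eq_zero (v : σ → R) {m : σ →₀ ℕ} {f : MvPolynomial σ R}
    (hf : ∀ s : σ →₀ ℕ, s.degree = m.degree + 1 → coeff s f = 0) :
    coeff m (dirDeriv v f) = 0 := by
  classical
  rw [f.as_sum, map_sum, coeff_sum]
  refine Finset.sum_eq_zero fun s hs => ?_
  have hdeg : s.degree ≠ m.degree + 1 := fun h => mem_support_iff.1 hs (hf s h)
  rw [dirDeriv, mkDerivation_monomial, coeff_smul, Finsupp.sum, coeff_sum,
    Finset.sum_eq_zero, smul_zero]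
  intro i hi
  have hle : Finsupp.single i 1 ≤ s :=
    Finsupp.single_le_iff.2 (Nat.one_le_iff_ne_zero.2 (Finsupp.mem_support_iff.1 hi))
  have hne : s - Finsupp.single i 1 ≠ m := by
    rintro rfl
    apply hdeg
    conv_lhs => rw [← tsub_add_cancel_of_le hle]
    simp
  rw [smul_eq_mul, mul_comm, coeff_C_mul, coeff_monomial, if_neg hne, mul_zero]

lemma iterate_dirDeriv_eq_zero_of_coeff (v : σ → R) {k : ℕ} {f : MvPolynomial σ R}
    (hf : ∀ m : σ →₀ ℕ, k ≤ m.degree → coeff m f = 0) : (dirDeriv v)^[k] f = 0 := by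
  induction k generalizing f with
  | zero => ext m; simpa using hf m (Nat.zero_le _)
  | succ k ih =>
    rw [Function.iterate_succ_apply]
    exact ih fun m hm => coeff_dirDeriv_eq_zero v fun s hs => hf s (by lia)

lemma iterate_dirDeriv_eq_zero_of_totalDegree_lt (v : σ → R) {k : ℕ}
    {f : MvPolynomial σ R} (hf : f.totalDegree < k) : (dirDeriv v)^[k] f = 0 :=
  iterate_dirDeriv_eq_zero_of_coeff v fun _ hm =>
    coeff_eq_zero_of_totalDegree_lt (hf.trans_le hm)

lemma iterate_derivation_mul {A : Type*} [CommSemiring A] [Algebra R A] (D : Derivation R A A)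
    {q : A} (hq : D q = 0) (k : ℕ) (h : A) : D^[k] (q * h) = q * D^[k] h :=
  (Function.Semiconj.iterate_right (f := (q * ·)) (fun h => by simp [hq]) k h).symm

lemma iterate_dirDeriv_eq_zero_of_dvd [NoZeroDivisors R] {v : σ → R} {k : ℕ}
    {q f : MvPolynomial σ R} (hq : dirDeriv v q = 0) (hdvd : q ∣ f)
    (hdeg : f.totalDegree < q.totalDegree + k) : (dirDeriv v)^[k] f = 0 := by
  obtain ⟨h, rfl⟩ := hdvd
  rcases eq_or_ne (q * h) 0 with hqh | hqh
  · rw [hqh, iterate_map_zero]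
  rw [totalDegree_mul_of_isDomain (left_ne_zero_of_mul hqh) (right_ne_zero_of_mul hqh)] at hdeg
  rw [iterate_derivation_mul _ hq, iterate_dirDeriv_eq_zero_of_totalDegree_lt v (by lia), mul_zero]

end DirectionalDerivative

section Restriction

variable {σ R : Type*} [CommSemiring R]

/-- Restriction of a polynomial to the parametrized affine line `t ↦ p + t • v`. -/
noncomputable def restrictLine (p v : σ → R) : MvPolynomial σ R →ₐ[R] Polynomial R :=
  aeval fun i => Polynomial.C (v i) * Polynomial.X + Polynomial.C (p i)

lemma restrictLine_X (p v : σ → R) (i : σ) :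
    restrictLine p v (X i) = Polynomial.C (v i) * Polynomial.X + Polynomial.C (p i) :=
  aeval_X _ i

lemma eval_restrictLine (p v : σ → R) (f : MvPolynomial σ R) (t : R) :
    (restrictLine p v f).eval t = eval (p + t • v) f := by
  induction f using MvPolynomial.induction_on with
  | C r => simp [restrictLine]
  | add f g hf hg => simp [hf, hg]
  | mul_X f i hf =>
    rw [map_mul, map_mul, Polynomial.eval_mul, hf, restrictLine_X]
    simp [add_comm, mul_comm t]

lemma derivative_restrictLine (p v : σ → R) (f : MvPolynomial σ R) :
    (restrictLine p v f).derivative = restrictLine p v (dirDeriv v f) := by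
  induction f using MvPolynomial.induction_on with
  | C r => simp [restrictLine]
  | add f g hf hg => simp [hf, hg]
  | mul_X f i hf =>
    have hC : restrictLine p v (C (v i)) = Polynomial.C (v i) := aeval_C _ _
    simp only [map_mul, map_add, Polynomial.derivative_mul, Polynomial.derivative_C,
      Polynomial.derivative_X, Derivation.leibniz, dirDeriv_X, smul_eq_mul, restrictLine_X, hf, hC]
    ring

lemma natDegree_restrictLine_le (p v : σ → R) (f : MvPolynomial σ R) :
    (restrictLine p v f).natDegree ≤ f.totalDegree := by
  simpa [restrictLine] using aeval_natDegree_le f le_rfl _ fun i =>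
    Polynomial.natDegree_linear_le (a := v i) (b := p i)

lemma homogenize_restrictLine (p v : σ → R) {f : MvPolynomial σ R} {n : ℕ}
    (hf : f.IsHomogeneous n) :
    (restrictLine p v f).homogenize n =
      aeval (fun i => C (v i) * X (0 : Fin 2) + C (p i) * X (1 : Fin 2)) f := by
  apply Polynomial.homogenize_eq_of_isHomogeneous
  · simpa using hf.aeval _ fun i =>
      (isHomogeneous_C_mul_X (v i) 0).add (isHomogeneous_C_mul_X (p i) 1)
  · rw [comp_aeval_apply, restrictLine]
    simp [Polynomial.C_eq_algebraMap]

lemma aeval_const_mul_of_isHomogeneous {A : Type*} [CommSemiring A] [Algebra R A]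
    {f : MvPolynomial σ R} {n : ℕ} (hf : f.IsHomogeneous n) (r : A) (g : σ → A) :
    aeval (fun i => r * g i) f = r ^ n * aeval g f := by
  simp only [aeval_def, eval₂_eq, Finset.mul_sum]
  refine Finset.sum_congr rfl fun d hd => ?_
  simp only [mul_pow, Finset.prod_mul_distrib, Finset.prod_pow_eq_pow_sum,
    ← hf.degree_eq_sum_deg_support hd]
  ring

end Restriction

section LinearForms

variable {R : Type*} [CommSemiring R]

/-- The linear form `a x + b y`. -/
noncomputable def linForm (a b : R) : MvPolynomial (Fin 2) R :=
  C a * X (0 : Fin 2) + C b * X (1 : Fin 2)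

lemma eval_linForm (a b : R) (x : Fin 2 → R) : eval x (linForm a b) = a * x 0 + b * x 1 := by
  simp [linForm]

lemma dirDeriv_linForm (a b : R) (v : Fin 2 → R) :
    dirDeriv v (linForm a b) = C (a * v 0 + b * v 1) := by
  simp [linForm]

lemma isHomogeneous_linForm (a b : R) : (linForm a b).IsHomogeneous 1 :=
  (isHomogeneous_C_mul_X a 0).add (isHomogeneous_C_mul_X b 1)

lemma linForm_ne_zero {a b : R} (hab : ¬(a = 0 ∧ b = 0)) : linForm a b ≠ 0 := by
  refine fun h => hab ⟨?_, ?_⟩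
  · simpa [eval_linForm] using congrArg (eval ![1, 0]) h
  · simpa [eval_linForm] using congrArg (eval ![0, 1]) h

end LinearForms

section BinaryForms

variable {R : Type*} [CommRing R]

-- `x ↦ (p₁ x₀ - p₀ x₁, v₀ x₁ - v₁ x₀)` is the adjugate of `(s, t) ↦ s • v + t • p`.
lemma aeval_homogenize_restrictLine (p v : Fin 2 → R) {f : MvPolynomial (Fin 2) R} {n : ℕ}
    (hf : f.IsHomogeneous n) :
    aeval ![linForm (p 1) (-p 0), linForm (-v 1) (v 0)] ((restrictLine p v f).homogenize n) =
      C (v 0 * p 1 - v 1 * p 0) ^ n * f := by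
  have hadjugate (i : Fin 2) :
      aeval ![linForm (p 1) (-p 0), linForm (-v 1) (v 0)]
          (C (v i) * X (0 : Fin 2) + C (p i) * X (1 : Fin 2)) =
        C (v 0 * p 1 - v 1 * p 0) * (X i : MvPolynomial (Fin 2) R) := by
    fin_cases i <;> simp [linForm, algebraMap_eq] <;> ring
  rw [homogenize_restrictLine p v hf, comp_aeval_apply]
  simp only [hadjugate, aeval_const_mul_of_isHomogeneous hf, aeval_X_left_apply]

lemma C_pow_mul_eq_of_restrictLine_eq_C_mul_X_pow {p v : Fin 2 → R} {f : MvPolynomial (Fin 2) R}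
    {n m : ℕ} (hf : f.IsHomogeneous n) (hmn : m ≤ n) {c : R}
    (hc : restrictLine p v f = Polynomial.C c * Polynomial.X ^ m) :
    C (v 0 * p 1 - v 1 * p 0) ^ n * f =
      C c * linForm (p 1) (-p 0) ^ m * linForm (-v 1) (v 0) ^ (n - m) := by
  rw [← aeval_homogenize_restrictLine p v hf, hc, Polynomial.homogenize_C_mul,
    Polynomial.homogenize_X_pow hmn]
  simp [algebraMap_eq, mul_assoc]

lemma eq_of_restrictLine_eq_C_mul_X_pow {K : Type*} [Field K] {p v : Fin 2 → K}
    (hdet : v 0 * p 1 - v 1 * p 0 ≠ 0) {f : MvPolynomial (Fin 2) K} {n m : ℕ}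
    (hf : f.IsHomogeneous n) (hmn : m ≤ n) {c : K}
    (hc : restrictLine p v f = Polynomial.C c * Polynomial.X ^ m) :
    f = C (c / (v 0 * p 1 - v 1 * p 0) ^ n) * linForm (p 1) (-p 0) ^ m *
      linForm (-v 1) (v 0) ^ (n - m) := by
  have hdetn : (v 0 * p 1 - v 1 * p 0) ^ n ≠ 0 := pow_ne_zero n hdet
  apply mul_left_cancel₀ (C_ne_zero.2 hdetn)
  rw [← mul_assoc, ← mul_assoc, ← C_mul, mul_div_cancel₀ _ hdetn, C_pow,
    C_pow_mul_eq_of_restrictLine_eq_C_mul_X_pow hf hmn hc]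

lemma exists_eval_dirDeriv_eq_zero_and_eval_ne_zero {K : Type*} [Field K] [IsAlgClosed K]
    [CharZero K] {f : MvPolynomial (Fin 2) K} {n : ℕ} (hf : f.IsHomogeneous n) {p v : Fin 2 → K}
    (hdet : v 0 * p 1 - v 1 * p 0 ≠ 0) (hp : eval p f = 0)
    (hne : ∀ (c : K) (m : ℕ), m ≤ n →
      f ≠ C c * linForm (p 1) (-p 0) ^ m * linForm (-v 1) (v 0) ^ (n - m)) :
    ∃ t : K, eval (p + t • v) (dirDeriv v f) = 0 ∧ eval (p + t • v) f ≠ 0 := by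
  set P := restrictLine p v f
  have hdeg : P.natDegree ≤ n := (natDegree_restrictLine_le p v f).trans hf.totalDegree_le
  have hP : P ≠ Polynomial.C P.leadingCoeff * (Polynomial.X - Polynomial.C 0) ^ P.natDegree := by
    rw [Polynomial.C_0, sub_zero]
    exact fun hP => hne _ _ hdeg (eq_of_restrictLine_eq_C_mul_X_pow hdet hf hdeg hP)
  simpa only [P, derivative_restrictLine, eval_restrictLine] using
    exists_eval_derivative_eq_zero_and_eval_ne_zero (r := 0) (by simpa [P, eval_restrictLine]) hP

lemma iterate_dirDeriv_eq_zero_of_linForm_pow_dvd [NoZeroDivisors R] {a b : R}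
    (hab : ¬(a = 0 ∧ b = 0)) {f : MvPolynomial (Fin 2) R} {δ k : ℕ} (hdvd : linForm a b ^ δ ∣ f)
    (hdeg : f.totalDegree < δ + k) : (dirDeriv ![-b, a])^[k] f = 0 := by
  have hℓ : dirDeriv ![-b, a] (linForm a b) = 0 := by
    simp [dirDeriv_linForm, mul_comm]
  have hdegℓ : (linForm a b ^ δ).totalDegree = δ := by
    simpa using ((isHomogeneous_linForm a b).pow δ).totalDegree
      (pow_ne_zero δ (linForm_ne_zero hab))
  exact iterate_dirDeriv_eq_zero_of_dvd (by simp [Derivation.leibniz_pow, hℓ]) hdvd (by rwa [hdegℓ])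

lemma eval_eq_zero_of_linForm_pow_dvd {a b : R} {f : MvPolynomial (Fin 2) R} {δ : ℕ} (hδ : δ ≠ 0)
    (hdvd : linForm a b ^ δ ∣ f) : eval ![-b, a] f = 0 := by
  obtain ⟨h, rfl⟩ := (dvd_pow_self _ hδ).trans hdvd
  simp [eval_linForm, mul_comm]

end BinaryForms

section Conjugation

lemma mul_conj_add_mul_conj_ne_zero {𝕜 : Type*} [RCLike 𝕜] {a b : 𝕜} (hab : ¬(a = 0 ∧ b = 0)) :
    a * starRingEnd 𝕜 a + b * starRingEnd 𝕜 b ≠ 0 := by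
  rw [RCLike.mul_conj, RCLike.mul_conj]
  norm_cast
  rwa [add_eq_zero_iff_of_nonneg (sq_nonneg _) (sq_nonneg _), sq_eq_zero_iff, sq_eq_zero_iff,
    norm_eq_zero, norm_eq_zero]

/-- The rotated Dicke states with `n` parties, as binary forms under the Majorana correspondence:
nonzero multiples of a product of powers of two orthogonal linear forms. -/
def IsRotatedDicke {K : Type*} [Field K] [StarRing K] (n : ℕ) (f : MvPolynomial (Fin 2) K) :
    Prop :=
  ∃ (c : K) (p : ℕ) (a₁ b₁ a₂ b₂ : K), c ≠ 0 ∧ p ≤ n ∧ ¬(a₁ = 0 ∧ b₁ = 0) ∧ ¬(a₂ = 0 ∧ b₂ = 0) ∧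
    starRingEnd K a₁ * a₂ + starRingEnd K b₁ * b₂ = 0 ∧
    f = C c * linForm a₁ b₁ ^ p * linForm a₂ b₂ ^ (n - p)

lemma isRotatedDicke_of_eq {K : Type*} [Field K] [StarRing K] {n m : ℕ}
    {f : MvPolynomial (Fin 2) K} (hf : f ≠ 0) {a b c : K} (hab : ¬(a = 0 ∧ b = 0)) (hmn : m ≤ n)
    (hfm : f = C c * linForm a b ^ m * linForm (-starRingEnd K b) (starRingEnd K a) ^ (n - m)) :
    IsRotatedDicke n f := by
  have hc : c ≠ 0 := by
    rintro rfl
    simp [hf] at hfm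
  exact ⟨c, m, a, b, _, _, hc, hmn, hab, by simpa [and_comm] using hab, by ring, hfm⟩

end Conjugation

theorem extended_hardy_measurements_exist_general {K : Type*} [Field K] [IsAlgClosed K] [CharZero K]
    {n δ : ℕ} (hδ : δ ≠ 0) {f : MvPolynomial (Fin 2) K} (hf : f.IsHomogeneous n)
    {a b a' b' : K} (hpair : a * a' + b * b' ≠ 0)
    (hne : ∀ (c : K) (m : ℕ), m ≤ n → f ≠ C c * linForm a b ^ m * linForm (-b') a' ^ (n - m))
    (hdvd : linForm a b ^ δ ∣ f) :
    ∃ c d : K, ¬(c = 0 ∧ d = 0) ∧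
      eval ![-d, c] f ≠ 0 ∧
      eval ![-d, c] (dirDeriv ![a', b'] f) = 0 ∧
      eval ![-b, a] f = 0 ∧
      ∀ k : ℕ, n - δ < k → (dirDeriv ![-b, a])^[k] f = 0 := by
  have hroot : eval ![-b, a] f = 0 := eval_eq_zero_of_linForm_pow_dvd hδ hdvd
  have hab : ¬(a = 0 ∧ b = 0) := by
    rintro ⟨rfl, rfl⟩
    simp at hpair
  have hdet : a' * a - b' * -b ≠ 0 := by
    convert hpair using 1
    ring
  obtain ⟨t, hcrit, hval⟩ := exists_eval_dirDeriv_eq_zero_and_eval_ne_zero hf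
    (p := ![-b, a]) (v := ![a', b']) hdet hroot (by simpa using hne)
  have hpoint : ![-b, a] + t • ![a', b'] = ![-(b - t * a'), a + t * b'] := by
    ext i
    fin_cases i <;> simp
    ring
  rw [hpoint] at hcrit hval
  refine ⟨a + t * b', b - t * a', fun ⟨hc, hd⟩ => hpair ?_, hval, hcrit, hroot, fun k hk =>
    iterate_dirDeriv_eq_zero_of_linForm_pow_dvd hab hdvd (hf.totalDegree_le.trans_lt (by lia))⟩
  linear_combination a' * hc + b' * hd

/-- every non-Dicke degree-`n` binary form `f` with a linear factor
`(a·x + b·y)^δ` admits measurement directions realizing the extended Hardy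
conditions: there is a nonzero `(c,d)` with (i) `f(−d,c) ≠ 0`, (ii) `g(−d,c) = 0`
where `g = conj(a)·∂f/∂x + conj(b)·∂f/∂y`, (iii) `f(−b,a) = 0`, and
(iv) `D^k f = 0` for all `n − δ < k ≤ n`, where `D = (−b)·∂/∂x + a·∂/∂y`. -/
theorem extended_hardy_measurements_exist (n δ : ℕ) (hn : 2 ≤ n) (hδ : 1 ≤ δ)
    (f : MvPolynomial (Fin 2) ℂ) (hf : f ≠ 0) (hhom : f.IsHomogeneous n)
    (hnotdicke : ¬ ∃ (K : ℂ) (p : ℕ) (a₁ b₁ a₂ b₂ : ℂ), K ≠ 0 ∧ p ≤ n ∧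
        ¬(a₁ = 0 ∧ b₁ = 0) ∧ ¬(a₂ = 0 ∧ b₂ = 0) ∧
        (starRingEnd ℂ) a₁ * a₂ + (starRingEnd ℂ) b₁ * b₂ = 0 ∧
        f = C K * (C a₁ * X (0 : Fin 2) + C b₁ * X (1 : Fin 2)) ^ p
              * (C a₂ * X (0 : Fin 2) + C b₂ * X (1 : Fin 2)) ^ (n - p))
    (a b : ℂ) (hab : ¬(a = 0 ∧ b = 0))
    (hdvd : (C a * X (0 : Fin 2) + C b * X (1 : Fin 2)) ^ δ ∣ f)
    (g : MvPolynomial (Fin 2) ℂ)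
    (hg : g = C ((starRingEnd ℂ) a) * pderiv (0 : Fin 2) f
            + C ((starRingEnd ℂ) b) * pderiv (1 : Fin 2) f) :
    ∃ c d : ℂ, ¬(c = 0 ∧ d = 0) ∧
      eval ![-d, c] f ≠ 0 ∧
      eval ![-d, c] g = 0 ∧
      eval ![-b, a] f = 0 ∧
      ∀ k : ℕ, n - δ < k → k ≤ n →
        (fun p : MvPolynomial (Fin 2) ℂ =>
          C (-b) * pderiv (0 : Fin 2) p + C a * pderiv (1 : Fin 2) p)^[k] f = 0 := by
  obtain ⟨c, d, hcd, hval, hcrit, hroot, hiter⟩ := extended_hardy_measurements_exist_general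
    (Nat.one_le_iff_ne_zero.1 hδ) hhom (mul_conj_add_mul_conj_ne_zero hab)
    (fun _ _ hmn hfm => hnotdicke (isRotatedDicke_of_eq hf hab hmn hfm)) hdvd
  simp only [dirDeriv_fin_two] at hcrit hiter
  exact ⟨c, d, hcd, hval, hg ▸ hcrit, hroot, fun k hk _ => hiter k hk⟩
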